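/- Fix b, h > 0 and 0 < λ < 1 ≤ M, and let ρ = b/(b+h). For every Borel measurable policy π : ℝ^N → [0, M] acting on N censored samples, the supremum over demand distributions G ∈ 𝒢 with G⁻(λ) < ρ of E_{D_1,…,D_N i.i.d. ∼ G}[ Regret_G(π(min(D_1,λ), …, min(D_N,λ))) − Δ_G ] is at least h·(M−λ)·√(1−ρ)·min(ρ, 1−ρ)·min(ρ, 3ρ−1)·e^{−1/2} / (64·√N). -/

import Mathlib

open MeasureTheory Set

/-- Newsvendor cost of ordering quantity `q` under demand distribution `F`,
with underage cost `b` and overage cost `h`. -/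
noncomputable def nvCost (b h : ℝ) (F : Measure ℝ) (q : ℝ) : ℝ :=
  ∫ x, (b * max (x - q) 0 + h * max (q - x) 0) ∂F

/-- Optimal newsvendor quantity: the `ρ`-th quantile of `F`. -/
noncomputable def qStar (ρ : ℝ) (F : Measure ℝ) : ℝ :=
  sInf {q : ℝ | ρ ≤ (F (Iic q)).toReal}

/-- The set `𝒢` of admissible demand distributions: Borel probability measures on ℝ
supported on `[0, ∞)` with finite mean and optimal newsvendor quantity at most `M`. -/
def GoodDist (ρ M : ℝ) : Set (Measure ℝ) :=
  {F | IsProbabilityMeasure F ∧ F (Iio 0) = 0 ∧ Integrable id F ∧ qStar ρ F ≤ M}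

/-- The ambiguity set `𝒜_λ`: all admissible distributions agreeing with `G` before `lam`. -/
def Ambig (ρ M : ℝ) (G : Measure ℝ) (lam : ℝ) : Set (Measure ℝ) :=
  {F | F ∈ GoodDist ρ M ∧ ∀ x < lam, F (Iic x) = G (Iic x)}

/-- Worst-case regret of an ordering quantity `q` over the ambiguity set. -/
noncomputable def Regret (b h ρ M : ℝ) (G : Measure ℝ) (lam q : ℝ) : ℝ :=
  sSup ((fun F => nvCost b h F q - nvCost b h F (qStar ρ F)) '' Ambig ρ M G lam)

/-- Minimax risk `Δ`. -/
noncomputable def Risk (b h ρ M : ℝ) (G : Measure ℝ) (lam : ℝ) : ℝ :=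
  sInf (Regret b h ρ M G lam '' Icc 0 M)

/-- The unidentifiable ordering quantity `q†_G`. -/
noncomputable def qDagger (b h M : ℝ) (G : Measure ℝ) (lam : ℝ) : ℝ :=
  (b * M + h * lam - (b + h) * (G (Iio lam)).toReal * M) /
    ((b + h) * (1 - (G (Iio lam)).toReal))

/-- The two-point-tail distribution `F_p`: agrees with `G` on `[0, λ)`, places an atom
of mass `p` at `λ` and an atom of mass `1 - p - G⁻(λ)` at `M`. -/
noncomputable def Fp (G : Measure ℝ) (lam M p : ℝ) : Measure ℝ :=
  G.restrict (Iio lam) + ENNReal.ofReal p • Measure.dirac lam +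
    ENNReal.ofReal (1 - p - (G (Iio lam)).toReal) • Measure.dirac M

/-- The `N`-fold product (i.i.d.) measure of `G` (equal to `Measure.pi` whenever `G`
is sigma-finite, in particular for probability measures). -/
noncomputable def iidPi (N : ℕ) (G : Measure ℝ) : Measure (Fin N → ℝ) := by
  classical
  exact if h : SigmaFinite G then
    haveI := h
    Measure.pi fun _ => G
  else 0

/-!
The newsvendor cost is convex, and for `G` with `G⁻(λ) < ρ` the worst-case regret of `q` is bounded
below by the regret when all the mass of `G` on `[λ, ∞)` sits at `λ`, which is `h (q - λ)` or more,
and when it all sits at `M`, which is `(b - (b + h) G⁻(λ)) (M - q)` or more. These two lines cross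
at `q†_G`, where their common value bounds the minimax risk from above. Hence the excess regret of
`q` grows at least linearly in its distance to `q†_G`.

Take two distributions on `{0, λ}`, with masses `ρ / 2` and `ρ / 2 + ρ / (3 √N)` at `0`. Their
quantities `q†` differ by order `1 / √N`, so the two excess regrets of any `q` add up to at least
that order. The `χ²` divergence between the two is of order `1 / N`, so that between their `N`-fold
products is at most `1`, and by Le Cam's method no policy can reliably tell them apart.
-/

open ProbabilityTheory

section Cost

variable {b h : ℝ} {F : Measure ℝ} [IsProbabilityMeasure F]

lemma integrable_max_sub_zero (hF : Integrable id F) (q : ℝ) :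
    Integrable (fun x => max (q - x) 0) F :=
  ((integrable_const q).sub hF).pos_part

lemma nvCost_eq_mul_add_mul_integral (b h : ℝ) (hF : Integrable id F) (q : ℝ) :
    nvCost b h F q = b * (∫ x, x ∂F - q) + (b + h) * ∫ x, max (q - x) 0 ∂F := by
  have hloss (x : ℝ) : b * max (x - q) 0 + h * max (q - x) 0 =
      b * (x - q) + (b + h) * max (q - x) 0 := by
    have hpos_part := max_zero_sub_max_neg_zero_eq_self (x - q)
    rw [neg_sub] at hpos_part
    linear_combination b * hpos_part
  have hlin : Integrable (fun x : ℝ => x - q) F := hF.sub (integrable_const q)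
  simp only [nvCost, hloss]
  rw [integral_add (hlin.const_mul b) ((integrable_max_sub_zero hF q).const_mul _),
    integral_const_mul, integral_const_mul, integral_sub (by exact hF) (integrable_const q)]
  simp

lemma indicator_mul_sub_le_max_sub_max {z : ℝ} {s : Set ℝ} (hIio : Iio z ⊆ s) (hIic : s ⊆ Iic z)
    (q x : ℝ) : s.indicator (fun _ => q - z) x ≤ max (q - x) 0 - max (z - x) 0 := by
  by_cases hx : x ∈ s
  · have hxz : x ≤ z := hIic hx
    rw [indicator_of_mem hx, max_eq_left (sub_nonneg.2 hxz)]
    linarith [le_max_left (q - x) 0]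
  · have hzx : z ≤ x := not_lt.1 fun hlt => hx (hIio hlt)
    rw [indicator_of_notMem hx, max_eq_right (sub_nonpos.2 hzx), sub_zero]
    exact le_max_right _ _

/- The subdifferential of the cost at `z` is `[(b + h) F(z-) - b, (b + h) F(z) - b]`; the set `s`
selects one of its endpoints. -/
lemma mul_sub_le_nvCost_sub_nvCost (hbh : 0 ≤ b + h) (hF : Integrable id F) {z : ℝ} {s : Set ℝ}
    (hs : MeasurableSet s) (hIio : Iio z ⊆ s) (hIic : s ⊆ Iic z) (q : ℝ) :
    ((b + h) * F.real s - b) * (q - z) ≤ nvCost b h F q - nvCost b h F z := by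
  have hshortfall : F.real s * (q - z) ≤ ∫ x, max (q - x) 0 ∂F - ∫ x, max (z - x) 0 ∂F := by
    calc F.real s * (q - z) = ∫ x, s.indicator (fun _ => q - z) x ∂F := by
          rw [integral_indicator_const _ hs, smul_eq_mul]
      _ ≤ ∫ x, (max (q - x) 0 - max (z - x) 0) ∂F :=
          integral_mono ((integrable_const _).indicator hs)
            ((integrable_max_sub_zero hF q).sub (integrable_max_sub_zero hF z))
            (indicator_mul_sub_le_max_sub_max hIio hIic q)
      _ = _ := integral_sub (integrable_max_sub_zero hF q) (integrable_max_sub_zero hF z)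
  rw [nvCost_eq_mul_add_mul_integral b h hF, nvCost_eq_mul_add_mul_integral b h hF]
  linarith [mul_le_mul_of_nonneg_left hshortfall hbh]

lemma nvCost_sub_nvCost_le (hb : 0 ≤ b) (hh : 0 ≤ h) (hF : Integrable id F) (q q' : ℝ) :
    nvCost b h F q - nvCost b h F q' ≤ (b + h) * |q - q'| := by
  have hsub := mul_sub_le_nvCost_sub_nvCost (by positivity) hF measurableSet_Iic Iio_subset_Iic_self
    subset_rfl q' (b := b) (h := h) (z := q)
  have hslope : |(b + h) * F.real (Iic q) - b| ≤ b + h := by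
    have hle := mul_le_of_le_one_right (add_nonneg hb hh) (measureReal_le_one (μ := F) (s := Iic q))
    have hnonneg : 0 ≤ (b + h) * F.real (Iic q) := by positivity
    exact abs_le.2 ⟨by linarith, by linarith⟩
  calc nvCost b h F q - nvCost b h F q'
      ≤ ((b + h) * F.real (Iic q) - b) * (q - q') := by linarith
    _ ≤ |(b + h) * F.real (Iic q) - b| * |q - q'| := by
        rw [← abs_mul]; exact le_abs_self _
    _ ≤ (b + h) * |q - q'| := by gcongr

end Cost

section Quantile

variable {ρ : ℝ} {F : Measure ℝ} [IsProbabilityMeasure F]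

lemma qStar_le_iff (hρ0 : 0 < ρ) (hρ1 : ρ < 1) (z : ℝ) :
    qStar ρ F ≤ z ↔ ρ ≤ F.real (Iic z) := by
  simp only [qStar, ← measureReal_def, ← cdf_eq_real]
  set S : Set ℝ := {q | ρ ≤ cdf F q}
  have hS_bdd : BddBelow S := by
    obtain ⟨x, hx⟩ := ((tendsto_cdf_atBot F).eventually_lt_const hρ0).exists
    exact ⟨x, fun q hq => le_of_lt ((monotone_cdf F).reflect_lt (hx.trans_le hq))⟩
  have hS_nonempty : S.Nonempty :=
    (((tendsto_cdf_atTop F).eventually_const_lt hρ1).exists).imp fun _ => le_of_lt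
  refine ⟨fun hz => ?_, fun hz => csInf_le hS_bdd hz⟩
  have hright : Filter.Tendsto (cdf F) (nhdsWithin z (Ioi z)) (nhds (cdf F z)) :=
    ((cdf F).right_continuous z).mono_left (nhdsWithin_mono z Ioi_subset_Ici_self)
  refine ge_of_tendsto hright (eventually_nhdsWithin_of_forall fun y hy => ?_)
  obtain ⟨q, hqS, hqy⟩ := exists_lt_of_csInf_lt hS_nonempty (hz.trans_lt hy)
  exact hqS.trans (monotone_cdf F hqy.le)

lemma le_qStar_of_measureReal_Iio_lt (hρ0 : 0 < ρ) (hρ1 : ρ < 1) {z : ℝ}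
    (hz : F.real (Iio z) < ρ) : z ≤ qStar ρ F := by
  refine le_of_forall_lt fun x hx => lt_of_not_ge fun hle => ?_
  have hmono : F.real (Iic x) ≤ F.real (Iio z) := measureReal_mono (Iic_subset_Iio.2 hx)
  linarith [(qStar_le_iff hρ0 hρ1 x).1 hle]

end Quantile

section Ambiguity

variable {b h ρ M lam q : ℝ} {F G : Measure ℝ}

lemma qStar_mem_Icc (hρ0 : 0 < ρ) (hρ1 : ρ < 1) (hF : F ∈ GoodDist ρ M) :
    qStar ρ F ∈ Icc 0 M := by
  obtain ⟨_, hsupp, -, hqM⟩ := hF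
  exact ⟨le_qStar_of_measureReal_Iio_lt hρ0 hρ1 (by simpa [measureReal_def, hsupp]), hqM⟩

lemma self_mem_Ambig (hG : G ∈ GoodDist ρ M) : G ∈ Ambig ρ M G lam := ⟨hG, fun _ _ => rfl⟩

lemma measure_Iio_eq_of_mem_Ambig (hF : F ∈ Ambig ρ M G lam) : F (Iio lam) = G (Iio lam) := by
  obtain ⟨u, hu_mono, hu_lt, hu_tendsto⟩ := exists_seq_strictMono_tendsto lam
  have hIic_mono : Monotone fun n => Iic (u n) := fun _ _ hmn =>
    Iic_subset_Iic.2 (hu_mono.monotone hmn)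
  rw [← iUnion_Iic_eq_Iio_of_lt_of_tendsto hu_lt hu_tendsto, hIic_mono.measure_iUnion,
    hIic_mono.measure_iUnion]
  exact iSup_congr fun n => hF.2 _ (hu_lt n)

lemma abs_nvCost_sub_nvCost_qStar_le (hb : 0 ≤ b) (hh : 0 ≤ h) (hρ0 : 0 < ρ) (hρ1 : ρ < 1)
    (hF : F ∈ GoodDist ρ M) (hq : q ∈ Icc 0 M) :
    |nvCost b h F q - nvCost b h F (qStar ρ F)| ≤ (b + h) * M := by
  have := hF.1
  have hdist : |q - qStar ρ F| ≤ M := by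
    simpa using abs_sub_le_of_le_of_le hq.1 hq.2 (qStar_mem_Icc hρ0 hρ1 hF).1
      (qStar_mem_Icc hρ0 hρ1 hF).2
  have hlip : |nvCost b h F q - nvCost b h F (qStar ρ F)| ≤ (b + h) * |q - qStar ρ F| := by
    refine abs_sub_le_iff.2 ⟨nvCost_sub_nvCost_le hb hh hF.2.2.1 _ _, ?_⟩
    rw [abs_sub_comm]
    exact nvCost_sub_nvCost_le hb hh hF.2.2.1 _ _
  exact hlip.trans (by gcongr)

lemma nvCost_sub_nvCost_qStar_le_Regret (hb : 0 ≤ b) (hh : 0 ≤ h) (hρ0 : 0 < ρ) (hρ1 : ρ < 1)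
    (hF : F ∈ Ambig ρ M G lam) (hq : q ∈ Icc 0 M) :
    nvCost b h F q - nvCost b h F (qStar ρ F) ≤ Regret b h ρ M G lam q := by
  refine le_csSup ⟨(b + h) * M, ?_⟩ ⟨F, hF, rfl⟩
  rintro _ ⟨F', hF', rfl⟩
  exact (abs_le.1 (abs_nvCost_sub_nvCost_qStar_le hb hh hρ0 hρ1 hF'.1 hq)).2

lemma abs_Regret_le (hb : 0 ≤ b) (hh : 0 ≤ h) (hρ0 : 0 < ρ) (hρ1 : ρ < 1)
    (hG : G ∈ GoodDist ρ M) (hq : q ∈ Icc 0 M) : |Regret b h ρ M G lam q| ≤ (b + h) * M := by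
  refine abs_le.2 ⟨?_, csSup_le ⟨_, G, self_mem_Ambig hG, rfl⟩ ?_⟩
  · exact (abs_le.1 (abs_nvCost_sub_nvCost_qStar_le hb hh hρ0 hρ1 hG hq)).1.trans
      (nvCost_sub_nvCost_qStar_le_Regret hb hh hρ0 hρ1 (self_mem_Ambig hG) hq)
  · rintro _ ⟨F, hF, rfl⟩
    exact (abs_le.1 (abs_nvCost_sub_nvCost_qStar_le hb hh hρ0 hρ1 hF.1 hq)).2

lemma Risk_le_Regret (hb : 0 ≤ b) (hh : 0 ≤ h) (hρ0 : 0 < ρ) (hρ1 : ρ < 1)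
    (hG : G ∈ GoodDist ρ M) (hq : q ∈ Icc 0 M) :
    Risk b h ρ M G lam ≤ Regret b h ρ M G lam q := by
  refine csInf_le ⟨-((b + h) * M), ?_⟩ ⟨q, hq, rfl⟩
  rintro _ ⟨q', hq', rfl⟩
  exact (abs_le.1 (abs_Regret_le hb hh hρ0 hρ1 hG hq')).1

lemma neg_le_Risk (hb : 0 ≤ b) (hh : 0 ≤ h) (hρ0 : 0 < ρ) (hρ1 : ρ < 1) (hM : 0 ≤ M)
    (hG : G ∈ GoodDist ρ M) : -((b + h) * M) ≤ Risk b h ρ M G lam := by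
  refine le_csInf ⟨_, 0, ⟨le_rfl, hM⟩, rfl⟩ ?_
  rintro _ ⟨q, hq, rfl⟩
  exact (abs_le.1 (abs_Regret_le hb hh hρ0 hρ1 hG hq)).1

end Ambiguity

section WorstCase

variable {b h ρ M lam q z : ℝ} {G : Measure ℝ}

lemma Fp_zero (G : Measure ℝ) [IsProbabilityMeasure G] (lam z : ℝ) :
    Fp G lam z 0 = G.restrict (Iio lam) + G (Ici lam) • Measure.dirac z := by
  have hcompl : ENNReal.ofReal (1 - (G (Iio lam)).toReal) = G (Ici lam) := by
    rw [← measureReal_def, ← probReal_compl_eq_one_sub measurableSet_Iio, compl_Iio,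
      ofReal_measureReal]
  simp [Fp, hcompl]

lemma isProbabilityMeasure_Fp_zero (G : Measure ℝ) [IsProbabilityMeasure G] (lam z : ℝ) :
    IsProbabilityMeasure (Fp G lam z 0) := by
  refine ⟨?_⟩
  rw [Fp_zero]
  simpa [compl_Iio] using prob_add_prob_compl (μ := G) (measurableSet_Iio (a := lam))

lemma Fp_zero_apply_of_notMem [IsProbabilityMeasure G] {s : Set ℝ} (hs : MeasurableSet s)
    (hz : z ∉ s) : Fp G lam z 0 s = G (s ∩ Iio lam) := by
  simp [Fp_zero, Measure.restrict_apply hs, hs, hz]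

lemma Fp_zero_Iic_self [IsProbabilityMeasure G] (hz : lam ≤ z) : Fp G lam z 0 (Iic z) = 1 := by
  have hinter : Iic z ∩ Iio lam = Iio lam :=
    inter_eq_right.2 ((Iio_subset_Iic_self).trans (Iic_subset_Iic.2 hz))
  rw [Fp_zero]
  simpa [Measure.restrict_apply, hinter, compl_Iio] using
    prob_add_prob_compl (μ := G) (measurableSet_Iio (a := lam))

lemma measureReal_Fp_zero_Iio_self [IsProbabilityMeasure G] (hz : lam ≤ z) :
    (Fp G lam z 0).real (Iio z) = G.real (Iio lam) := by
  rw [measureReal_def, Fp_zero_apply_of_notMem measurableSet_Iio (by simp),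
    inter_eq_right.2 (Iio_subset_Iio hz), measureReal_def]

lemma Fp_zero_mem_Ambig (hρ0 : 0 < ρ) (hρ1 : ρ < 1) (hG : G ∈ GoodDist ρ M) (hlam : 0 ≤ lam)
    (hz : z ∈ Icc lam M) : Fp G lam z 0 ∈ Ambig ρ M G lam := by
  have := hG.1
  have := isProbabilityMeasure_Fp_zero G lam z
  refine ⟨⟨inferInstance, ?_, ?_, ?_⟩, fun x hx => ?_⟩
  · rw [Fp_zero_apply_of_notMem measurableSet_Iio (by simpa using hlam.trans hz.1)]
    exact measure_mono_null inter_subset_left hG.2.1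
  · rw [Fp_zero]
    exact hG.2.2.1.restrict.add_measure
      ((integrable_dirac (by simp)).smul_measure (measure_ne_top _ _))
  · refine ((qStar_le_iff hρ0 hρ1 z).2 ?_).trans hz.2
    simpa [measureReal_def, Fp_zero_Iic_self hz.1] using hρ1.le
  · rw [Fp_zero_apply_of_notMem measurableSet_Iic (by simpa using hx.trans_le hz.1),
      inter_eq_left.2 (Iic_subset_Iio.2 hx)]

lemma qStar_Fp_zero (hρ0 : 0 < ρ) (hρ1 : ρ < 1) [IsProbabilityMeasure G]
    (hGρ : G.real (Iio lam) < ρ) (hz : lam ≤ z) : qStar ρ (Fp G lam z 0) = z := by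
  have := isProbabilityMeasure_Fp_zero G lam z
  refine le_antisymm ((qStar_le_iff hρ0 hρ1 z).2 ?_) (le_qStar_of_measureReal_Iio_lt hρ0 hρ1 ?_)
  · simpa [measureReal_def, Fp_zero_Iic_self hz] using hρ1.le
  · rwa [measureReal_Fp_zero_Iio_self hz]

lemma mul_sub_lam_le_Regret (hb : 0 ≤ b) (hh : 0 ≤ h) (hρ0 : 0 < ρ) (hρ1 : ρ < 1)
    (hG : G ∈ GoodDist ρ M) (hGρ : G.real (Iio lam) < ρ) (hlam : 0 ≤ lam) (hlamM : lam ≤ M)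
    (hq : q ∈ Icc 0 M) : h * (q - lam) ≤ Regret b h ρ M G lam q := by
  have := hG.1
  have := isProbabilityMeasure_Fp_zero G lam lam
  have hF := Fp_zero_mem_Ambig hρ0 hρ1 hG hlam ⟨le_rfl, hlamM⟩
  have hsub := mul_sub_le_nvCost_sub_nvCost (add_nonneg hb hh) hF.1.2.2.1
    measurableSet_Iic Iio_subset_Iic_self (subset_refl (Iic lam)) q
  rw [measureReal_def, Fp_zero_Iic_self le_rfl, ENNReal.toReal_one, mul_one,
    add_sub_cancel_left] at hsub
  have hregret := nvCost_sub_nvCost_qStar_le_Regret hb hh hρ0 hρ1 hF hq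
  rw [qStar_Fp_zero hρ0 hρ1 hGρ le_rfl] at hregret
  exact hsub.trans hregret

lemma mul_M_sub_le_Regret (hb : 0 ≤ b) (hh : 0 ≤ h) (hρ0 : 0 < ρ) (hρ1 : ρ < 1)
    (hG : G ∈ GoodDist ρ M) (hGρ : G.real (Iio lam) < ρ) (hlam : 0 ≤ lam) (hlamM : lam ≤ M)
    (hq : q ∈ Icc 0 M) :
    (b - (b + h) * G.real (Iio lam)) * (M - q) ≤ Regret b h ρ M G lam q := by
  have := hG.1
  have := isProbabilityMeasure_Fp_zero G lam M
  have hF := Fp_zero_mem_Ambig hρ0 hρ1 hG hlam ⟨hlamM, le_rfl⟩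
  have hsub := mul_sub_le_nvCost_sub_nvCost (add_nonneg hb hh) hF.1.2.2.1
    measurableSet_Iio (subset_refl (Iio M)) Iio_subset_Iic_self q
  rw [measureReal_Fp_zero_Iio_self hlamM] at hsub
  have hregret := nvCost_sub_nvCost_qStar_le_Regret hb hh hρ0 hρ1 hF hq
  rw [qStar_Fp_zero hρ0 hρ1 hGρ hlamM] at hregret
  linarith

lemma Regret_le_max (hb : 0 ≤ b) (hh : 0 ≤ h) (hρ0 : 0 < ρ) (hρ1 : ρ < 1)
    (hG : G ∈ GoodDist ρ M) (hGρ : G.real (Iio lam) < ρ) (hGb : (b + h) * G.real (Iio lam) ≤ b)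
    (hq : lam ≤ q) :
    Regret b h ρ M G lam q ≤
      max (h * (q - lam)) ((b - (b + h) * G.real (Iio lam)) * (M - q)) := by
  refine csSup_le ⟨_, G, self_mem_Ambig hG, rfl⟩ ?_
  rintro _ ⟨F, hF, rfl⟩
  have := hF.1.1
  have hIio : F.real (Iio lam) = G.real (Iio lam) := by
    rw [measureReal_def, measure_Iio_eq_of_mem_Ambig hF, measureReal_def]
  have hlam_le : lam ≤ qStar ρ F := le_qStar_of_measureReal_Iio_lt hρ0 hρ1 (hIio ▸ hGρ)
  have hG_le : G.real (Iio lam) ≤ F.real (Iic q) :=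
    hIio ▸ measureReal_mono (Iio_subset_Iic_self.trans (Iic_subset_Iic.2 hq))
  have hsub := mul_sub_le_nvCost_sub_nvCost (add_nonneg hb hh) hF.1.2.2.1
    measurableSet_Iic Iio_subset_Iic_self (subset_refl (Iic q)) (qStar ρ F)
  rcases le_total (qStar ρ F) q with hle | hle
  · apply le_max_of_le_left
    have hF_le : (b + h) * F.real (Iic q) ≤ b + h :=
      mul_le_of_le_one_right (add_nonneg hb hh) measureReal_le_one
    calc nvCost b h F q - nvCost b h F (qStar ρ F)
        ≤ ((b + h) * F.real (Iic q) - b) * (q - qStar ρ F) := by linarith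
      _ ≤ h * (q - qStar ρ F) := by
          gcongr
          linarith
      _ ≤ h * (q - lam) := by gcongr
  · apply le_max_of_le_right
    calc nvCost b h F q - nvCost b h F (qStar ρ F)
        ≤ (b - (b + h) * F.real (Iic q)) * (qStar ρ F - q) := by linarith
      _ ≤ (b - (b + h) * G.real (Iio lam)) * (qStar ρ F - q) := by
          gcongr
      _ ≤ (b - (b + h) * G.real (Iio lam)) * (M - q) :=
          mul_le_mul_of_nonneg_left (sub_le_sub_right hF.1.2.2.2 q) (sub_nonneg.2 hGb)

end WorstCase

lemma criticalRatio_mem_Ioo {b h ρ : ℝ} (hb : 0 < b) (hh : 0 < h) (hρ : ρ = b / (b + h)) :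
    ρ ∈ Ioo 0 1 := by
  rw [hρ]
  exact ⟨by positivity, (div_lt_one (by positivity)).2 (by linarith)⟩

section ExcessRegret

variable {b h ρ M lam q κ : ℝ} {G G₁ G₂ : Measure ℝ}

lemma mul_qDagger_sub_eq (hbh : b + h ≠ 0) (hG : G.real (Iio lam) ≠ 1) :
    h * (qDagger b h M G lam - lam) =
      (b - (b + h) * G.real (Iio lam)) * (M - qDagger b h M G lam) := by
  have hG' : 1 - (G (Iio lam)).toReal ≠ 0 := sub_ne_zero.2 hG.symm
  rw [qDagger, measureReal_def]
  field_simp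
  ring

lemma qDagger_eq_sub (hbh : b + h ≠ 0) (hρ : ρ = b / (b + h)) (hG : G.real (Iio lam) ≠ 1) :
    qDagger b h M G lam = M - (M - lam) * (1 - ρ) * (1 - G.real (Iio lam))⁻¹ := by
  have hG' : 1 - (G (Iio lam)).toReal ≠ 0 := sub_ne_zero.2 hG.symm
  rw [qDagger, measureReal_def, hρ]
  field_simp
  ring

lemma qDagger_mem_Icc (hb : 0 < b) (hh : 0 < h) (hρ : ρ = b / (b + h)) (hlamM : lam ≤ M)
    (hG : G.real (Iio lam) < ρ) : qDagger b h M G lam ∈ Icc lam M := by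
  obtain ⟨-, hρ1⟩ := criticalRatio_mem_Ioo hb hh hρ
  have hG1 : 0 < 1 - G.real (Iio lam) := by linarith
  have hfrac : (1 - ρ) * (1 - G.real (Iio lam))⁻¹ ∈ Icc 0 1 :=
    ⟨mul_nonneg (by linarith) (by positivity), by
      rw [← div_eq_mul_inv, div_le_one hG1]; linarith⟩
  rw [qDagger_eq_sub (by positivity) hρ (by linarith), mul_assoc]
  constructor
  · linarith [mul_le_of_le_one_right (sub_nonneg.2 hlamM) hfrac.2]
  · linarith [mul_nonneg (sub_nonneg.2 hlamM) hfrac.1]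

lemma mul_sub_le_qDagger_sub_qDagger (hb : 0 < b) (hh : 0 < h) (hρ : ρ = b / (b + h))
    (hlamM : lam ≤ M) (hG₁₂ : G₁.real (Iio lam) ≤ G₂.real (Iio lam))
    (hG₂ : G₂.real (Iio lam) < 1) :
    (M - lam) * (1 - ρ) * (G₂.real (Iio lam) - G₁.real (Iio lam)) ≤
      qDagger b h M G₁ lam - qDagger b h M G₂ lam := by
  obtain ⟨-, hρ1⟩ := criticalRatio_mem_Ioo hb hh hρ
  rw [qDagger_eq_sub (by positivity) hρ (by linarith),
    qDagger_eq_sub (by positivity) hρ (by linarith)]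
  set g₁ := G₁.real (Iio lam)
  set g₂ := G₂.real (Iio lam)
  have hg₁ : 0 ≤ g₁ := measureReal_nonneg
  have hinv : g₂ - g₁ ≤ (1 - g₂)⁻¹ - (1 - g₁)⁻¹ := by
    rw [inv_sub_inv (by linarith) (by linarith), sub_sub_sub_cancel_left]
    refine le_div_self (by linarith) (mul_pos (by linarith) (by linarith)) ?_
    exact mul_le_one₀ (by linarith) (by linarith) (by linarith)
  calc (M - lam) * (1 - ρ) * (g₂ - g₁)
      ≤ (M - lam) * (1 - ρ) * ((1 - g₂)⁻¹ - (1 - g₁)⁻¹) :=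
        mul_le_mul_of_nonneg_left hinv (mul_nonneg (by linarith) (by linarith))
    _ = _ := by ring

/-- The gap `Regret_G(q) - Δ_G` between the worst-case regret of `q` and the minimax risk;
its mean over the censored samples measures a policy. -/
noncomputable def excessRegret (b h ρ M : ℝ) (G : Measure ℝ) (lam q : ℝ) : ℝ :=
  Regret b h ρ M G lam q - Risk b h ρ M G lam

lemma excessRegret_nonneg (hb : 0 ≤ b) (hh : 0 ≤ h) (hρ0 : 0 < ρ) (hρ1 : ρ < 1)
    (hG : G ∈ GoodDist ρ M) (hq : q ∈ Icc 0 M) : 0 ≤ excessRegret b h ρ M G lam q :=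
  sub_nonneg.2 (Risk_le_Regret hb hh hρ0 hρ1 hG hq)

lemma excessRegret_le (hb : 0 ≤ b) (hh : 0 ≤ h) (hρ0 : 0 < ρ) (hρ1 : ρ < 1)
    (hG : G ∈ GoodDist ρ M) (hq : q ∈ Icc 0 M) :
    excessRegret b h ρ M G lam q ≤ 2 * ((b + h) * M) := by
  have hregret := (abs_le.1 (abs_Regret_le (lam := lam) hb hh hρ0 hρ1 hG hq)).2
  have hrisk := neg_le_Risk (lam := lam) hb hh hρ0 hρ1 (hq.1.trans hq.2) hG
  rw [excessRegret]
  linarith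

lemma Risk_le_mul_qDagger_sub (hb : 0 < b) (hh : 0 < h) (hρ : ρ = b / (b + h)) (hlam : 0 ≤ lam)
    (hlamM : lam ≤ M) (hG : G ∈ GoodDist ρ M) (hGρ : G.real (Iio lam) < ρ) :
    Risk b h ρ M G lam ≤ h * (qDagger b h M G lam - lam) := by
  obtain ⟨hρ0, hρ1⟩ := criticalRatio_mem_Ioo hb hh hρ
  have hdagger := qDagger_mem_Icc hb hh hρ hlamM hGρ
  have hGb : (b + h) * G.real (Iio lam) ≤ b := by
    rw [← le_div_iff₀' (by positivity), ← hρ]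
    exact hGρ.le
  calc Risk b h ρ M G lam ≤ Regret b h ρ M G lam (qDagger b h M G lam) :=
        Risk_le_Regret hb.le hh.le hρ0 hρ1 hG ⟨hlam.trans hdagger.1, hdagger.2⟩
    _ ≤ _ := Regret_le_max hb.le hh.le hρ0 hρ1 hG hGρ hGb hdagger.1
    _ = h * (qDagger b h M G lam - lam) := by
        rw [← mul_qDagger_sub_eq (by positivity) (by linarith), max_self]

lemma mul_sub_qDagger_le_excessRegret (hb : 0 < b) (hh : 0 < h) (hρ : ρ = b / (b + h))
    (hlam : 0 ≤ lam) (hlamM : lam ≤ M) (hG : G ∈ GoodDist ρ M) (hGρ : G.real (Iio lam) < ρ)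
    (hq : q ∈ Icc 0 M) : h * (q - qDagger b h M G lam) ≤ excessRegret b h ρ M G lam q := by
  obtain ⟨hρ0, hρ1⟩ := criticalRatio_mem_Ioo hb hh hρ
  have hrisk := Risk_le_mul_qDagger_sub hb hh hρ hlam hlamM hG hGρ
  have hregret := mul_sub_lam_le_Regret hb.le hh.le hρ0 hρ1 hG hGρ hlam hlamM hq
  rw [excessRegret]
  linarith

lemma mul_qDagger_sub_le_excessRegret (hb : 0 < b) (hh : 0 < h) (hρ : ρ = b / (b + h))
    (hlam : 0 ≤ lam) (hlamM : lam ≤ M) (hG : G ∈ GoodDist ρ M) (hGρ : G.real (Iio lam) < ρ)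
    (hq : q ∈ Icc 0 M) :
    (b - (b + h) * G.real (Iio lam)) * (qDagger b h M G lam - q) ≤
      excessRegret b h ρ M G lam q := by
  obtain ⟨hρ0, hρ1⟩ := criticalRatio_mem_Ioo hb hh hρ
  have hrisk := Risk_le_mul_qDagger_sub hb hh hρ hlam hlamM hG hGρ
  rw [mul_qDagger_sub_eq (by positivity) (by linarith)] at hrisk
  have hregret := mul_M_sub_le_Regret hb.le hh.le hρ0 hρ1 hG hGρ hlam hlamM hq
  rw [excessRegret]
  linarith

lemma mul_sub_le_excessRegret_add (hb : 0 < b) (hh : 0 < h) (hρ : ρ = b / (b + h))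
    (hlam : 0 ≤ lam) (hlamM : lam ≤ M) (hG₁ : G₁ ∈ GoodDist ρ M) (hG₁ρ : G₁.real (Iio lam) < ρ)
    (hG₂ : G₂ ∈ GoodDist ρ M) (hG₂ρ : G₂.real (Iio lam) < ρ) (hκ : 0 ≤ κ)
    (hκ₁ : κ ≤ b - (b + h) * G₁.real (Iio lam)) (hκ₂ : κ ≤ h) (hq : q ∈ Icc 0 M) :
    κ * (qDagger b h M G₁ lam - qDagger b h M G₂ lam) ≤
      excessRegret b h ρ M G₁ lam q + excessRegret b h ρ M G₂ lam q := by
  obtain ⟨hρ0, hρ1⟩ := criticalRatio_mem_Ioo hb hh hρ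
  have hle {t x L : ℝ} (ht : κ ≤ t) (hL : t * x ≤ L) (hL0 : 0 ≤ L) : κ * x ≤ L := by
    rcases le_total 0 x with hx | hx
    · exact (mul_le_mul_of_nonneg_right ht hx).trans hL
    · exact (mul_nonpos_of_nonneg_of_nonpos hκ hx).trans hL0
  have hunder := hle hκ₁ (mul_qDagger_sub_le_excessRegret hb hh hρ hlam hlamM hG₁ hG₁ρ hq)
    (excessRegret_nonneg hb.le hh.le hρ0 hρ1 hG₁ hq)
  have hover := hle hκ₂ (mul_sub_qDagger_le_excessRegret hb hh hρ hlam hlamM hG₂ hG₂ρ hq)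
    (excessRegret_nonneg hb.le hh.le hρ0 hρ1 hG₂ hq)
  linarith

end ExcessRegret

section LeCam

variable {α : Type*} [Fintype α]

lemma mul_one_sub_le_sum_mul_add_sum_mul {p q f g : α → ℝ} {D : ℝ} (hp : ∀ a, 0 ≤ p a)
    (hq : ∀ a, 0 ≤ q a) (hp1 : ∑ a, p a = 1) (hq1 : ∑ a, q a = 1) (hf : ∀ a, 0 ≤ f a)
    (hg : ∀ a, 0 ≤ g a) (hfg : ∀ a, D ≤ f a + g a) :
    D * (1 - (∑ a, |q a - p a|) / 2) ≤ ∑ a, p a * f a + ∑ a, q a * g a := by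
  have hmin (a : α) : min (p a) (q a) = 2⁻¹ * (p a + q a - |q a - p a|) :=
    inf_eq_half_smul_add_sub_abs_sub' ℝ (p a) (q a)
  calc D * (1 - (∑ a, |q a - p a|) / 2) = ∑ a, min (p a) (q a) * D := by
        simp only [hmin, ← Finset.sum_mul, ← Finset.mul_sum, Finset.sum_sub_distrib,
          Finset.sum_add_distrib, hp1, hq1]
        ring
    _ ≤ ∑ a, min (p a) (q a) * (f a + g a) :=
        Finset.sum_le_sum fun a _ => mul_le_mul_of_nonneg_left (hfg a) (le_min (hp a) (hq a))
    _ ≤ ∑ a, (p a * f a + q a * g a) := Finset.sum_le_sum fun a _ => by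
        rw [mul_add]
        exact add_le_add (mul_le_mul_of_nonneg_right (min_le_left _ _) (hf a))
          (mul_le_mul_of_nonneg_right (min_le_right _ _) (hg a))
    _ = _ := Finset.sum_add_distrib

lemma sq_sum_abs_sub_le_sum_sq_div_sub_one {p q : α → ℝ} (hp : ∀ a, 0 < p a)
    (hp1 : ∑ a, p a = 1) (hq1 : ∑ a, q a = 1) :
    (∑ a, |q a - p a|) ^ 2 ≤ ∑ a, q a ^ 2 / p a - 1 := by
  have hcs := Finset.sq_sum_div_le_sum_sq_div Finset.univ (fun a => |q a - p a|)
    (g := p) fun a _ => hp a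
  have hsq (a : α) : |q a - p a| ^ 2 / p a = q a ^ 2 / p a - 2 * q a + p a := by
    have := (hp a).ne'
    rw [sq_abs]
    field_simp
    ring
  simp only [hsq, Finset.sum_add_distrib, Finset.sum_sub_distrib, ← Finset.mul_sum, hp1, hq1] at hcs
  linarith

lemma sum_prod_eq_one {p : α → ℝ} (hp1 : ∑ a, p a = 1) (N : ℕ) :
    ∑ v : Fin N → α, ∏ i, p (v i) = 1 := by
  rw [← Fintype.sum_pow, hp1, one_pow]

lemma sq_sum_abs_prod_sub_prod_le {p q : α → ℝ} (hp : ∀ a, 0 < p a) (hp1 : ∑ a, p a = 1)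
    (hq1 : ∑ a, q a = 1) (N : ℕ) :
    (∑ v : Fin N → α, |∏ i, q (v i) - ∏ i, p (v i)|) ^ 2 ≤ (∑ a, q a ^ 2 / p a) ^ N - 1 := by
  rw [Fintype.sum_pow (fun a => q a ^ 2 / p a) N]
  simp only [Finset.prod_div_distrib, Finset.prod_pow]
  exact sq_sum_abs_sub_le_sum_sq_div_sub_one (fun v => Finset.prod_pos fun i _ => hp (v i))
    (sum_prod_eq_one hp1 N) (sum_prod_eq_one hq1 N)

lemma iidPi_eq_pi (N : ℕ) (G : Measure ℝ) [SigmaFinite G] :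
    iidPi N G = Measure.pi fun _ => G :=
  dif_pos ‹_›

variable [MeasurableSpace α] [MeasurableSingletonClass α] {μ ν : Measure α}
  [IsProbabilityMeasure μ] [IsProbabilityMeasure ν] {x : α → ℝ}

lemma integral_iidPi_map (hx : Function.Injective x) (N : ℕ) (f : (Fin N → ℝ) → ℝ) :
    ∫ d, f d ∂iidPi N (μ.map x) =
      ∑ v : Fin N → α, (∏ i, μ.real {v i}) * f fun i => x (v i) := by
  have hx_meas : Measurable x := measurable_of_countable x
  have := Measure.isProbabilityMeasure_map (μ := μ) hx_meas.aemeasurable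
  have hemb : MeasurableEmbedding fun (v : Fin N → α) i => x (v i) :=
    (measurable_of_countable _).measurableEmbedding fun v w hvw =>
      funext fun i => hx (congrFun hvw i)
  rw [iidPi_eq_pi, ← Measure.pi_map_pi fun _ => hx_meas.aemeasurable, hemb.integral_map,
    integral_fintype .of_finite]
  simp [measureReal_def, ENNReal.toReal_prod]

lemma half_le_integral_iidPi_add_integral_iidPi (hx : Function.Injective x)
    (hμ : ∀ a, 0 < μ.real {a}) {N : ℕ} (hχ : (∑ a, ν.real {a} ^ 2 / μ.real {a}) ^ N ≤ 2)
    {D : ℝ} (hD : 0 ≤ D) {f g : (Fin N → ℝ) → ℝ} (hf : ∀ d, 0 ≤ f d) (hg : ∀ d, 0 ≤ g d)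
    (hfg : ∀ d, D ≤ f d + g d) :
    D / 2 ≤ ∫ d, f d ∂iidPi N (μ.map x) + ∫ d, g d ∂iidPi N (ν.map x) := by
  have hsum (η : Measure α) [IsProbabilityMeasure η] : ∑ a, η.real {a} = 1 := by
    rw [sum_measureReal_singleton, Finset.coe_univ, probReal_univ]
  have htv : ∑ v : Fin N → α, |∏ i, ν.real {v i} - ∏ i, μ.real {v i}| ≤ 1 := by
    refine (sq_le_one_iff₀ (by positivity)).1 ?_
    linarith [sq_sum_abs_prod_sub_prod_le hμ (hsum μ) (hsum ν) N]
  rw [integral_iidPi_map hx, integral_iidPi_map hx]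
  calc D / 2 ≤ D * (1 - (∑ v : Fin N → α, |∏ i, ν.real {v i} - ∏ i, μ.real {v i}|) / 2) := by
        rw [div_eq_mul_one_div]
        gcongr
        linarith
    _ ≤ _ := mul_one_sub_le_sum_mul_add_sum_mul
        (fun _ => by positivity) (fun _ => by positivity) (sum_prod_eq_one (hsum μ) N)
        (sum_prod_eq_one (hsum ν) N) (fun _ => hf _) (fun _ => hg _) fun _ => hfg _

lemma one_add_pow_le_two {x : ℝ} {N : ℕ} (hx0 : 0 ≤ x) (hx : N * x ≤ 1 / 2) :
    (1 + x) ^ N ≤ 2 := by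
  calc (1 + x) ^ N ≤ Real.exp x ^ N := by
        gcongr
        linarith [Real.add_one_le_exp x]
    _ = Real.exp (N * x) := (Real.exp_nat_mul x N).symm
    _ ≤ Real.exp (1 / 2) := Real.exp_le_exp.2 hx
    _ ≤ 1 / (1 - 1 / 2) :=
        Real.exp_bound_div_one_sub_of_interval (by norm_num) (by norm_num)
    _ = 2 := by norm_num

end LeCam

section ExpectedExcessRegret

variable {b h ρ M lam : ℝ} {N : ℕ} {π : (Fin N → ℝ) → ℝ} {G : Measure ℝ}

lemma bddAbove_expected_excessRegret (hb : 0 ≤ b) (hh : 0 ≤ h) (hρ0 : 0 < ρ) (hρ1 : ρ < 1)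
    (hπ : ∀ d, π d ∈ Icc 0 M) :
    BddAbove {r : ℝ | ∃ G ∈ GoodDist ρ M, G.real (Iio lam) < ρ ∧
      r = ∫ d, excessRegret b h ρ M G lam (π fun i => min (d i) lam) ∂iidPi N G} := by
  refine ⟨2 * ((b + h) * M), ?_⟩
  rintro _ ⟨G, hG, -, rfl⟩
  have := hG.1
  rw [iidPi_eq_pi]
  have hnorm := norm_integral_le_of_norm_le_const (μ := Measure.pi fun _ : Fin N => G)
    (f := fun d => excessRegret b h ρ M G lam (π fun i => min (d i) lam))
    (.of_forall fun d => by
      rw [Real.norm_of_nonneg (excessRegret_nonneg hb hh hρ0 hρ1 hG (hπ _))]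
      exact excessRegret_le hb hh hρ0 hρ1 hG (hπ _))
  rw [probReal_univ, mul_one] at hnorm
  exact (Real.le_norm_self _).trans hnorm

lemma expected_excessRegret_le_sSup (hb : 0 ≤ b) (hh : 0 ≤ h) (hρ0 : 0 < ρ) (hρ1 : ρ < 1)
    (hπ : ∀ d, π d ∈ Icc 0 M) (hG : G ∈ GoodDist ρ M) (hGρ : G.real (Iio lam) < ρ) :
    ∫ d, excessRegret b h ρ M G lam (π fun i => min (d i) lam) ∂iidPi N G ≤
      sSup {r : ℝ | ∃ G ∈ GoodDist ρ M, (G (Iio lam)).toReal < ρ ∧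
        r = ∫ d, (Regret b h ρ M G lam (π fun i => min (d i) lam)
                    - Risk b h ρ M G lam) ∂iidPi N G} :=
  le_csSup (bddAbove_expected_excessRegret hb hh hρ0 hρ1 hπ) ⟨G, hG, hGρ, rfl⟩

end ExpectedExcessRegret

section Bernoulli

variable {ρ M lam : ℝ}

lemma bernoulliMeasure_mem_GoodDist (hρ0 : 0 < ρ) (hρ1 : ρ < 1) (hlam : 0 ≤ lam)
    (hlamM : lam ≤ M) (p : unitInterval) : bernoulliMeasure 0 lam p ∈ GoodDist ρ M := by
  refine ⟨inferInstance, ?_, integrable_bernoulliMeasure _ _ _ _, (qStar_le_iff hρ0 hρ1 M).2 ?_⟩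
  · exact bernoulliMeasure_apply_of_notMem_of_notMem p measurableSet_Iio (by simp) (by simpa)
  · rw [bernoulliMeasure_real_apply_of_mem_of_mem p measurableSet_Iic (hlam.trans hlamM) hlamM]
    exact hρ1.le

lemma measureReal_bernoulliMeasure_Iio (hlam : 0 < lam) (p : unitInterval) :
    (bernoulliMeasure 0 lam p).real (Iio lam) = p :=
  bernoulliMeasure_real_apply_of_mem_of_notMem p measurableSet_Iio hlam self_notMem_Iio

lemma bernoulliMeasure_eq_map_bool (x y : ℝ) (p : unitInterval) :
    bernoulliMeasure x y p = (bernoulliMeasure true false p).map fun v => cond v x y := by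
  simp

lemma sum_sq_div_bernoulliMeasure {p q : unitInterval} (hp0 : (0 : ℝ) < p) (hp1 : (p : ℝ) < 1) :
    ∑ a, (bernoulliMeasure true false q).real {a} ^ 2 / (bernoulliMeasure true false p).real {a} =
      1 + (q - p) ^ 2 / (p * (1 - p) : ℝ) := by
  have hp1' : 1 - (p : ℝ) ≠ 0 := by linarith
  have htrue (r : unitInterval) : (bernoulliMeasure true false r).real {true} = r := by simp
  have hfalse (r : unitInterval) : (bernoulliMeasure true false r).real {false} = 1 - r := by simp
  rw [Fintype.sum_bool, htrue, htrue, hfalse, hfalse]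
  field_simp
  ring

end Bernoulli

lemma half_le_expected_excessRegret_add {b h ρ M lam : ℝ} (hb : 0 < b) (hh : 0 < h)
    (hρ : ρ = b / (b + h)) (hlam : 0 < lam) (hlamM : lam ≤ M) {N : ℕ} {π : (Fin N → ℝ) → ℝ}
    (hπ : ∀ d, π d ∈ Icc 0 M) {p q : unitInterval} (hp0 : (0 : ℝ) < p) (hpq : (p : ℝ) ≤ q)
    (hqρ : (q : ℝ) < ρ) (hpq_sq : N * (((q : ℝ) - p) ^ 2 / (p * (1 - p))) ≤ 1 / 2) :
    (min h ((b + h) * (ρ - p)) * ((M - lam) * (1 - ρ) * (q - p))) / 2 ≤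
      ∫ d, excessRegret b h ρ M (bernoulliMeasure 0 lam p) lam (π fun i => min (d i) lam)
          ∂iidPi N (bernoulliMeasure 0 lam p) +
        ∫ d, excessRegret b h ρ M (bernoulliMeasure 0 lam q) lam (π fun i => min (d i) lam)
          ∂iidPi N (bernoulliMeasure 0 lam q) := by
  obtain ⟨hρ0, hρ1⟩ := criticalRatio_mem_Ioo hb hh hρ
  have hgood := bernoulliMeasure_mem_GoodDist hρ0 hρ1 hlam.le hlamM
  have hmass := measureReal_bernoulliMeasure_Iio hlam
  have hpρ := hpq.trans_lt hqρ
  have hp1 : (0 : ℝ) < 1 - p := by linarith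
  have hκ : 0 ≤ min h ((b + h) * (ρ - p)) :=
    le_min hh.le (mul_nonneg (by positivity) (by linarith))
  have hslope : (b + h) * (ρ - p) = b - (b + h) * p := by
    rw [hρ]
    field_simp
  have hinj : Function.Injective fun v => cond v 0 lam :=
    Bool.injective_iff.2 (by simpa using hlam.ne')
  have hdagger := mul_sub_le_qDagger_sub_qDagger hb hh hρ hlamM
    (G₁ := bernoulliMeasure 0 lam p) (G₂ := bernoulliMeasure 0 lam q)
    (by simpa only [hmass] using hpq) (by simpa only [hmass] using hqρ.trans hρ1)
  simp only [hmass] at hdagger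
  have hsep (d : Fin N → ℝ) := mul_sub_le_excessRegret_add hb hh hρ hlam.le hlamM (hgood p)
    (by rwa [hmass]) (hgood q) (by rwa [hmass]) hκ
    (by rw [hmass, ← hslope]; exact min_le_right _ _) (min_le_left _ _) (hπ fun i => min (d i) lam)
  have hlecam := half_le_integral_iidPi_add_integral_iidPi (N := N) hinj
    (μ := bernoulliMeasure true false p) (ν := bernoulliMeasure true false q)
    (Bool.forall_bool.2 ⟨by simpa using hp1, by simpa using hp0⟩)
    (by rw [sum_sq_div_bernoulliMeasure hp0 (by linarith)]
        exact one_add_pow_le_two (by positivity) hpq_sq)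
    (D := min h ((b + h) * (ρ - p)) * ((M - lam) * (1 - ρ) * (q - p)))
    (mul_nonneg hκ (mul_nonneg (mul_nonneg (by linarith) (by linarith)) (by linarith)))
    (fun d => excessRegret_nonneg hb.le hh.le hρ0 hρ1 (hgood p) (hπ fun i => min (d i) lam))
    (fun d => excessRegret_nonneg hb.le hh.le hρ0 hρ1 (hgood q) (hπ fun i => min (d i) lam))
    (fun d => (mul_le_mul_of_nonneg_left hdagger hκ).trans (hsep d))
  simpa only [← bernoulliMeasure_eq_map_bool] using hlecam

lemma rate_le_twoPoint_separation {b h ρ M lam ε : ℝ} (hb : 0 < b) (hh : 0 < h)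
    (hρ : ρ = b / (b + h)) (hlamM : lam ≤ M) (hε : 0 ≤ ε) :
    h * (M - lam) * min ρ (1 - ρ) * ε / 2 ≤
      min h ((b + h) * (ρ - ρ / 2)) * ((M - lam) * (1 - ρ) * ε) := by
  obtain ⟨-, hρ1⟩ := criticalRatio_mem_Ioo hb hh hρ
  have hhρ : h = (b + h) * (1 - ρ) := by
    rw [hρ]
    field_simp
    ring
  have hmin : (b + h) * (min ρ (1 - ρ) / 2) ≤ min h ((b + h) * (ρ - ρ / 2)) := by
    rw [le_min_iff]
    nth_rw 2 [hhρ]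
    constructor <;> gcongr
    · linarith [min_le_right ρ (1 - ρ)]
    · linarith [min_le_left ρ (1 - ρ)]
  calc h * (M - lam) * min ρ (1 - ρ) * ε / 2
      = (b + h) * (min ρ (1 - ρ) / 2) * ((M - lam) * (1 - ρ) * ε) := by
        linear_combination ((M - lam) * min ρ (1 - ρ) * ε / 2) * hhρ
    _ ≤ _ := mul_le_mul_of_nonneg_right hmin
        (mul_nonneg (mul_nonneg (by linarith) (by linarith)) hε)

lemma nat_mul_sq_div_le_half {ρ : ℝ} (hρ0 : 0 < ρ) (hρ1 : ρ < 1) {N : ℕ} (hN : 1 ≤ N) :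
    N * ((ρ / (3 * √N)) ^ 2 / (ρ / 2 * (1 - ρ / 2))) ≤ 1 / 2 := by
  have hN0 : (0 : ℝ) < N := by exact_mod_cast hN
  have hρ2 : 0 < 2 - ρ := by linarith
  have heq : N * ((ρ / (3 * √N)) ^ 2 / (ρ / 2 * (1 - ρ / 2))) = 4 / 9 * (ρ / (2 - ρ)) := by
    have : 1 - ρ / 2 ≠ 0 := by linarith
    rw [div_pow, mul_pow, Real.sq_sqrt hN0.le]
    field_simp
    ring
  rw [heq]
  linarith [(div_le_one hρ2).2 (by linarith : ρ ≤ 2 - ρ)]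

lemma sqrt_mul_exp_mul_rate_le_rate {h M lam ρ : ℝ} (hh : 0 ≤ h) (hlamM : lam ≤ M) (hρ0 : 0 ≤ ρ)
    (hρ1 : ρ ≤ 1) (N : ℕ) :
    h * (M - lam) * √(1 - ρ) * min ρ (1 - ρ) * min ρ (3 * ρ - 1) * Real.exp (-(1 / 2 : ℝ)) /
        (64 * √N) ≤
      h * (M - lam) * min ρ (1 - ρ) * ρ / (24 * √N) := by
  have hfactor : √(1 - ρ) * min ρ (3 * ρ - 1) * Real.exp (-(1 / 2 : ℝ)) ≤ ρ :=
    calc √(1 - ρ) * min ρ (3 * ρ - 1) * Real.exp (-(1 / 2 : ℝ))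
        ≤ √(1 - ρ) * ρ * Real.exp (-(1 / 2 : ℝ)) := by
          gcongr
          exact min_le_left _ _
      _ ≤ 1 * ρ * 1 := by
          gcongr
          · exact Real.sqrt_le_one.2 (by linarith)
          · exact Real.exp_le_one_iff.2 (by norm_num)
      _ = ρ := by ring
  have hscale : 0 ≤ h * (M - lam) * min ρ (1 - ρ) :=
    mul_nonneg (mul_nonneg hh (by linarith)) (le_min hρ0 (by linarith))
  calc _ = h * (M - lam) * min ρ (1 - ρ) *
          (√(1 - ρ) * min ρ (3 * ρ - 1) * Real.exp (-(1 / 2 : ℝ))) / √N / 64 := by ring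
    _ ≤ h * (M - lam) * min ρ (1 - ρ) * ρ / √N / 64 := by
        gcongr ?_ / √N / 64
        exact mul_le_mul_of_nonneg_left hfactor hscale
    _ ≤ h * (M - lam) * min ρ (1 - ρ) * ρ / √N / 24 := by
        gcongr
        norm_num
    _ = _ := by ring

theorem stmt19_general (b h M lam ρ : ℝ) (hb : 0 < b) (hh : 0 < h) (hlam : 0 < lam)
    (hlamM : lam ≤ M) (hρ : ρ = b / (b + h)) (N : ℕ) (hN : 1 ≤ N)
    (π : (Fin N → ℝ) → ℝ) (hπ : ∀ d, π d ∈ Icc (0 : ℝ) M) :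
    h * (M - lam) * min ρ (1 - ρ) * ρ / (24 * √N) ≤
      sSup {r : ℝ | ∃ G ∈ GoodDist ρ M, (G (Iio lam)).toReal < ρ ∧
        r = ∫ d, (Regret b h ρ M G lam (π fun i => min (d i) lam)
                    - Risk b h ρ M G lam) ∂(iidPi N G)} := by
  obtain ⟨hρ0, hρ1⟩ := criticalRatio_mem_Ioo hb hh hρ
  have hN1 : 1 ≤ √N := Real.one_le_sqrt.2 (by exact_mod_cast hN)
  set ε := ρ / (3 * √N) with hε
  have hε0 : 0 < ε := by positivity
  have hερ : ε ≤ ρ / 3 := div_le_div_of_nonneg_left hρ0.le (by norm_num) (by linarith)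
  let p : unitInterval := ⟨ρ / 2, by linarith, by linarith⟩
  let q : unitInterval := ⟨ρ / 2 + ε, by linarith, by linarith⟩
  have hqp : (q : ℝ) - p = ε := add_sub_cancel_left _ _
  have hle_sSup {s : unitInterval} (hs : (s : ℝ) < ρ) :=
    expected_excessRegret_le_sSup hb.le hh.le hρ0 hρ1 hπ
      (bernoulliMeasure_mem_GoodDist hρ0 hρ1 hlam.le hlamM s)
      (by rwa [measureReal_bernoulliMeasure_Iio hlam])
  have hpair := half_le_expected_excessRegret_add (p := p) (q := q) hb hh hρ hlam hlamM hπ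
    (half_pos hρ0) (by linarith) (by change ρ / 2 + ε < ρ; linarith)
    (by rw [hqp]; exact nat_mul_sq_div_le_half hρ0 hρ1 hN)
  rw [hqp] at hpair
  have hrate := rate_le_twoPoint_separation hb hh hρ hlamM hε0.le
  calc h * (M - lam) * min ρ (1 - ρ) * ρ / (24 * √N)
      = h * (M - lam) * min ρ (1 - ρ) * ε / 2 / 4 := by rw [hε]; field_simp; ring
    _ ≤ _ := by
      linarith [hle_sSup (s := p) (half_lt_self hρ0),
        hle_sSup (s := q) (by change ρ / 2 + ε < ρ; linarith)]

/-- lower bound in the strictly unidentifiable regime. -/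
theorem stmt19 (b h M lam ρ : ℝ) (hb : 0 < b) (hh : 0 < h)
    (hlam0 : 0 < lam) (hlam1 : lam < 1) (hM : 1 ≤ M)
    (hρ : ρ = b / (b + h)) (N : ℕ) (hN : 1 ≤ N)
    (π : (Fin N → ℝ) → ℝ) (hmeas : Measurable π) (hrange : ∀ d, π d ∈ Icc (0 : ℝ) M) :
    h * (M - lam) * Real.sqrt (1 - ρ) * min ρ (1 - ρ) * min ρ (3 * ρ - 1) *
        Real.exp (-(1 / 2 : ℝ)) / (64 * Real.sqrt (N : ℝ)) ≤
      sSup {r : ℝ | ∃ G ∈ GoodDist ρ M, (G (Iio lam)).toReal < ρ ∧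
        r = ∫ d, (Regret b h ρ M G lam (π fun i => min (d i) lam)
                    - Risk b h ρ M G lam) ∂(iidPi N G)} := by
  obtain ⟨hρ0, hρ1⟩ := criticalRatio_mem_Ioo hb hh hρ
  exact (sqrt_mul_exp_mul_rate_le_rate hh.le (by linarith) hρ0.le hρ1.le N).trans
    (stmt19_general b h M lam ρ hb hh hlam0 (by linarith) hρ N hN π hrange)
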